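/- (The generalized Bayes rule cannot sharpen vacuous prior intervals.) Let Π be a nonempty set of probability measures on a measurable space Ω, and let A be measurable with ℓ(A) = 0 and u(A) = 1 (a vacuous prior interval). Then for every measurable B with ℓ(B) > 0: ℓ_GB(A|B) = 0 and u_GB(A|B) = 1. -/

import Mathlib

open MeasureTheory

variable {Ω : Type*} [MeasurableSpace Ω]

/-- Lower probability of a set of measures: `ℓ(A) = inf_{P ∈ 𝔓} P(A)`. -/
noncomputable def lowP (𝔓 : Set (Measure Ω)) (A : Set Ω) : ℝ :=
  ⨅ P : 𝔓, (P.1 A).toReal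

/-- Upper probability of a set of measures: `u(A) = sup_{P ∈ 𝔓} P(A)`. -/
noncomputable def upP (𝔓 : Set (Measure Ω)) (A : Set Ω) : ℝ :=
  ⨆ P : 𝔓, (P.1 A).toReal

/-- Generalized Bayes conditional lower probability: `ℓ_GB(A|B) = inf_P P(A∩B)/P(B)`. -/
noncomputable def lowGB (𝔓 : Set (Measure Ω)) (A B : Set Ω) : ℝ :=
  ⨅ P : 𝔓, (P.1 (A ∩ B)).toReal / (P.1 B).toReal

/-- Generalized Bayes conditional upper probability: `u_GB(A|B) = sup_P P(A∩B)/P(B)`. -/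
noncomputable def upGB (𝔓 : Set (Measure Ω)) (A B : Set Ω) : ℝ :=
  ⨆ P : 𝔓, (P.1 (A ∩ B)).toReal / (P.1 B).toReal

/-- Dempster conditional upper probability: `u_D(A|B) = u(A∩B)/u(B)`. -/
noncomputable def upD (𝔓 : Set (Measure Ω)) (A B : Set Ω) : ℝ :=
  upP 𝔓 (A ∩ B) / upP 𝔓 B

/-- Dempster conditional lower probability: `ℓ_D(A|B) = 1 - u_D(Aᶜ|B)`. -/
noncomputable def lowD (𝔓 : Set (Measure Ω)) (A B : Set Ω) : ℝ :=
  1 - upD 𝔓 Aᶜ B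

/-- Geometric conditional lower probability: `ℓ_G(A|B) = ℓ(A∩B)/ℓ(B)`. -/
noncomputable def lowG (𝔓 : Set (Measure Ω)) (A B : Set Ω) : ℝ :=
  lowP 𝔓 (A ∩ B) / lowP 𝔓 B

/-- Geometric conditional upper probability: `u_G(A|B) = 1 - ℓ_G(Aᶜ|B)`. -/
noncomputable def upG (𝔓 : Set (Measure Ω)) (A B : Set Ω) : ℝ :=
  1 - lowG 𝔓 Aᶜ B

/-! Since `P(A ∩ B) / P(B) ≤ P(A) / ℓ(B)` for every prior `P`, a vanishing lower probability `ℓ(A)`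
forces `ℓ_GB(A|B) = 0`. The upper endpoint is the lower endpoint of the complement: `u(A) = 1` means
`ℓ(Aᶜ) = 0`, hence `ℓ_GB(Aᶜ|B) = 0`, and `ℓ_GB(Aᶜ|B) = 1 - u_GB(A|B)` because generalized Bayes
conditioning takes lower and upper envelopes of the conditioned measures `P(· | B)`. -/

open ProbabilityTheory

theorem lowP_le_measureReal {𝔓 : Set (Measure Ω)} {P : Measure Ω} (hP : P ∈ 𝔓) (A : Set Ω) :
    lowP 𝔓 A ≤ P.real A :=
  ciInf_le ⟨0, Set.forall_mem_range.2 fun _ => ENNReal.toReal_nonneg⟩ (⟨P, hP⟩ : 𝔓)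

theorem lowP_mono {𝔓 : Set (Measure Ω)} (hfin : ∀ P ∈ 𝔓, IsFiniteMeasure P) {A B : Set Ω}
    (hAB : A ⊆ B) : lowP 𝔓 A ≤ lowP 𝔓 B := by
  refine ciInf_mono ⟨0, Set.forall_mem_range.2 fun _ => ENNReal.toReal_nonneg⟩ fun P => ?_
  have := hfin P P.2
  exact measureReal_mono hAB

theorem lowP_compl {𝔓 : Set (Measure Ω)} (hne : 𝔓.Nonempty)
    (hprob : ∀ P ∈ 𝔓, IsProbabilityMeasure P) {A : Set Ω} (hA : MeasurableSet A) :
    lowP 𝔓 Aᶜ = 1 - upP 𝔓 A := by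
  have := hne.to_subtype
  have hbdd : BddAbove (Set.range fun P : 𝔓 => P.1.real A) :=
    ⟨1, Set.forall_mem_range.2 fun P => have := hprob P P.2; measureReal_le_one⟩
  calc lowP 𝔓 Aᶜ = ⨅ P : 𝔓, (1 - P.1.real A) :=
        iInf_congr fun P => have := hprob P P.2; probReal_compl_eq_one_sub hA
    _ = 1 - upP 𝔓 A :=
        (Antitone.map_ciSup_of_continuousAt (f := fun x : ℝ => 1 - x) (by fun_prop)
          (fun _ _ h => sub_le_sub_left h 1) hbdd).symm

/-- The posterior set of measures: every measure of the prior set `𝔓`, conditioned on `B`.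
Generalized Bayes conditioning of `𝔓` is taking lower and upper probabilities of this set. -/
def posterior (𝔓 : Set (Measure Ω)) (B : Set Ω) : Set (Measure Ω) :=
  (fun P : Measure Ω => P[|B]) '' 𝔓

theorem isProbabilityMeasure_of_mem_posterior {𝔓 : Set (Measure Ω)} {B : Set Ω}
    (hB : 0 < lowP 𝔓 B) : ∀ Q ∈ posterior 𝔓 B, IsProbabilityMeasure Q := by
  rintro _ ⟨P, hP, rfl⟩
  have hPB : 0 < (P B).toReal := hB.trans_le (lowP_le_measureReal hP B)
  obtain ⟨hpos, hfin⟩ := ENNReal.toReal_pos_iff.1 hPB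
  exact cond_isProbabilityMeasure_of_finite hpos.ne' hfin.ne

theorem cond_toReal_apply (P : Measure Ω) (A : Set Ω) {B : Set Ω} (hB : MeasurableSet B) :
    (P[|B] A).toReal = (P (A ∩ B)).toReal / (P B).toReal := by
  rw [cond_apply hB, ENNReal.toReal_mul, ENNReal.toReal_inv, Set.inter_comm, inv_mul_eq_div]

theorem lowP_posterior (𝔓 : Set (Measure Ω)) (A : Set Ω) {B : Set Ω} (hB : MeasurableSet B) :
    lowP (posterior 𝔓 B) A = lowGB 𝔓 A B :=
  (Set.imageFactorization_surjective.iInf_congr _ fun P => cond_toReal_apply P.1 A hB).symm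

theorem upP_posterior (𝔓 : Set (Measure Ω)) (A : Set Ω) {B : Set Ω} (hB : MeasurableSet B) :
    upP (posterior 𝔓 B) A = upGB 𝔓 A B :=
  (Set.imageFactorization_surjective.iSup_congr _ fun P => cond_toReal_apply P.1 A hB).symm

theorem lowGB_compl {𝔓 : Set (Measure Ω)} (hne : 𝔓.Nonempty) {A B : Set Ω}
    (hA : MeasurableSet A) (hB : MeasurableSet B) (hlB : 0 < lowP 𝔓 B) :
    lowGB 𝔓 Aᶜ B = 1 - upGB 𝔓 A B := by
  rw [← lowP_posterior 𝔓 Aᶜ hB, ← upP_posterior 𝔓 A hB]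
  exact lowP_compl (hne.image _) (isProbabilityMeasure_of_mem_posterior hlB) hA

theorem lowGB_nonneg (𝔓 : Set (Measure Ω)) (A B : Set Ω) : 0 ≤ lowGB 𝔓 A B :=
  Real.iInf_nonneg fun _ => div_nonneg ENNReal.toReal_nonneg ENNReal.toReal_nonneg

theorem lowGB_le_measureReal_div {𝔓 : Set (Measure Ω)} {P : Measure Ω} (hP : P ∈ 𝔓)
    (A B : Set Ω) : lowGB 𝔓 A B ≤ P.real (A ∩ B) / P.real B :=
  ciInf_le ⟨0, Set.forall_mem_range.2 fun _ =>
    div_nonneg ENNReal.toReal_nonneg ENNReal.toReal_nonneg⟩ (⟨P, hP⟩ : 𝔓)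

theorem lowGB_le_lowG {𝔓 : Set (Measure Ω)} (hne : 𝔓.Nonempty) (A : Set Ω) {B : Set Ω}
    (hlB : 0 < lowP 𝔓 B) : lowGB 𝔓 A B ≤ lowG 𝔓 A B := by
  have := hne.to_subtype
  refine (le_div_iff₀ hlB).2 (le_ciInf fun ⟨P, hP⟩ => ?_)
  have hPB : lowP 𝔓 B ≤ P.real B := lowP_le_measureReal hP B
  calc lowGB 𝔓 A B * lowP 𝔓 B
      ≤ P.real (A ∩ B) / P.real B * P.real B := by
        gcongr
        exact lowGB_le_measureReal_div hP A B
    _ = P.real (A ∩ B) := div_mul_cancel₀ _ (hlB.trans_le hPB).ne'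

theorem lowGB_eq_zero_of_lowP_eq_zero {𝔓 : Set (Measure Ω)} (hne : 𝔓.Nonempty)
    (hfin : ∀ P ∈ 𝔓, IsFiniteMeasure P) {A B : Set Ω} (hlA : lowP 𝔓 A = 0)
    (hlB : 0 < lowP 𝔓 B) : lowGB 𝔓 A B = 0 := by
  refine le_antisymm ?_ (lowGB_nonneg 𝔓 A B)
  calc lowGB 𝔓 A B ≤ lowP 𝔓 (A ∩ B) / lowP 𝔓 B := lowGB_le_lowG hne A hlB
    _ ≤ lowP 𝔓 A / lowP 𝔓 B := by
        gcongr
        exact lowP_mono hfin Set.inter_subset_left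
    _ = 0 := by rw [hlA, zero_div]

/-- Theorem 5.8, generalized Bayes part: the generalized Bayes rule cannot
sharpen a vacuous prior interval: if `ℓ(A) = 0` and `u(A) = 1` then `ℓ_GB(A|B) = 0` and
`u_GB(A|B) = 1` for every measurable `B` with `ℓ(B) > 0`. -/
theorem genBayes_keeps_vacuous
    (𝔓 : Set (Measure Ω)) (hne : 𝔓.Nonempty)
    (hprob : ∀ P ∈ 𝔓, IsProbabilityMeasure P)
    (A : Set Ω) (hA : MeasurableSet A)
    (hlA : lowP 𝔓 A = 0) (huA : upP 𝔓 A = 1) :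
    ∀ B : Set Ω, MeasurableSet B → 0 < lowP 𝔓 B →
      lowGB 𝔓 A B = 0 ∧ upGB 𝔓 A B = 1 := by
  intro B hB hlB
  have hfin : ∀ P ∈ 𝔓, IsFiniteMeasure P := fun P hP => have := hprob P hP; inferInstance
  have hlAc : lowP 𝔓 Aᶜ = 0 := by rw [lowP_compl hne hprob hA, huA, sub_self]
  have hlGBc : lowGB 𝔓 Aᶜ B = 0 := lowGB_eq_zero_of_lowP_eq_zero hne hfin hlAc hlB
  refine ⟨lowGB_eq_zero_of_lowP_eq_zero hne hfin hlA hlB, ?_⟩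
  linarith [lowGB_compl hne hA hB hlB]
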